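/- Let U ⊆ ℂ be an open set, V : ℂ → ℂ differentiable on U, and λ ∈ ℂ. Let ζ₀ : ℂ → ℂ be twice differentiable on U with ζ₀'(x) = V(x) − ζ₀(x)² on U, and let ζ_λ : ℂ → ℂ be twice differentiable on U with ζ_λ'(x) = V(x) − λ − ζ_λ(x)² on U, and suppose ζ_λ(x) ≠ ζ₀(x) for all x ∈ U. Define the Darboux-transformed potential V₊ = −ζ₀' + ζ₀² and the function ζ⁺_λ = ζ_λ + (ζ_λ' − ζ₀')/(ζ_λ − ζ₀). Then ζ⁺_λ satisfies the transformed Riccati equation: (ζ⁺_λ)'(x) = V₊(x) − λ − ζ⁺_λ(x)² for all x ∈ U. -/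

import Mathlib

/-!
Put `u = ζ - ζ₀`. Subtracting the two Riccati equations gives `u' = -λ - (ζ + ζ₀) u`, hence
`ζ + u' / u = -ζ₀ - λ / u`. This form of the Darboux transform contains no derivatives, so it can be
differentiated once more without differentiating the potential: `w = λ / u` satisfies
`w' = w² + 2 ζ₀ w + λ`, and completing the square gives `(-ζ₀ - w)' = -ζ₀' + ζ₀² - λ - (-ζ₀ - w)²`.
-/

section Riccati

variable {𝕜 F : Type*} [NontriviallyNormedField 𝕜] [NontriviallyNormedField F] [NormedAlgebra 𝕜 F]

/-- `ζ` solves the Riccati equation `ζ' = Q - ζ²` at every point of `U`. The equation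
`ζ' = V - λ - ζ²` of the Schrödinger operator is the case `Q = V - λ`. The derivative is the full
one, not the one within `U`. -/
def IsRiccatiSolutionOn (Q ζ : 𝕜 → F) (U : Set 𝕜) : Prop :=
  ∀ x ∈ U, HasDerivAt ζ (Q x - ζ x ^ 2) x

/-- The Darboux partner `V₊ = -ζ₀' + ζ₀²` of the potential `V = ζ₀' + ζ₀²`. -/
noncomputable def darbouxPotential (ζ₀ : 𝕜 → F) (x : 𝕜) : F :=
  -deriv ζ₀ x + ζ₀ x ^ 2

/-- The Darboux transform `ζ + (ln (ζ - ζ₀))'` of `ζ` with seed `ζ₀`, with the logarithmic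
derivative written as a quotient; it is meaningful only where `ζ ≠ ζ₀`. -/
noncomputable def darbouxTransform (ζ₀ ζ : 𝕜 → F) (x : 𝕜) : F :=
  ζ x + (deriv ζ x - deriv ζ₀ x) / (ζ x - ζ₀ x)

namespace IsRiccatiSolutionOn

variable {V Q₀ Q₁ ζ₀ ζ : 𝕜 → F} {lam : F} {U : Set 𝕜} {x : 𝕜}

theorem hasDerivAt_sub (h₁ : IsRiccatiSolutionOn Q₁ ζ U) (h₀ : IsRiccatiSolutionOn Q₀ ζ₀ U)
    (hx : x ∈ U) :
    HasDerivAt (fun y ↦ ζ y - ζ₀ y) (Q₁ x - Q₀ x - (ζ x + ζ₀ x) * (ζ x - ζ₀ x)) x :=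
  ((h₁ x hx).fun_sub (h₀ x hx)).congr_deriv (by ring)

theorem darbouxTransform_eq (h₀ : IsRiccatiSolutionOn V ζ₀ U)
    (h : IsRiccatiSolutionOn (fun y ↦ V y - lam) ζ U) (hx : x ∈ U) (hne : ζ x ≠ ζ₀ x) :
    darbouxTransform ζ₀ ζ x = -ζ₀ x - lam / (ζ x - ζ₀ x) := by
  have hu : ζ x - ζ₀ x ≠ 0 := sub_ne_zero.mpr hne
  have hderiv : deriv ζ x - deriv ζ₀ x = -lam - (ζ x + ζ₀ x) * (ζ x - ζ₀ x) := by
    rw [(h x hx).deriv, (h₀ x hx).deriv]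
    ring
  rw [darbouxTransform, hderiv, sub_div, mul_div_cancel_right₀ _ hu]
  ring

theorem hasDerivAt_div_sub (h₀ : IsRiccatiSolutionOn V ζ₀ U)
    (h : IsRiccatiSolutionOn (fun y ↦ V y - lam) ζ U) (hx : x ∈ U) (hne : ζ x ≠ ζ₀ x) :
    HasDerivAt (fun y ↦ lam / (ζ y - ζ₀ y))
      ((lam / (ζ x - ζ₀ x)) ^ 2 + 2 * ζ₀ x * (lam / (ζ x - ζ₀ x)) + lam) x := by
  have hu : ζ x - ζ₀ x ≠ 0 := sub_ne_zero.mpr hne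
  refine ((hasDerivAt_const x lam).fun_div (h.hasDerivAt_sub h₀ hx) hu).congr_deriv ?_
  field_simp
  ring

theorem neg_sub_div_sub (h₀ : IsRiccatiSolutionOn V ζ₀ U)
    (h : IsRiccatiSolutionOn (fun y ↦ V y - lam) ζ U) (hne : ∀ x ∈ U, ζ x ≠ ζ₀ x) :
    IsRiccatiSolutionOn (fun y ↦ darbouxPotential ζ₀ y - lam)
      (fun y ↦ -ζ₀ y - lam / (ζ y - ζ₀ y)) U := by
  intro x hx
  have hw := h₀.hasDerivAt_div_sub h hx (hne x hx)
  refine ((h₀ x hx).fun_neg.fun_sub hw).congr_deriv ?_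
  simp only [darbouxPotential, (h₀ x hx).deriv]
  ring

theorem congr {Q ζ₁ ζ₂ : 𝕜 → F} (h : IsRiccatiSolutionOn Q ζ₁ U) (hU : IsOpen U)
    (heq : Set.EqOn ζ₂ ζ₁ U) : IsRiccatiSolutionOn Q ζ₂ U := fun x hx ↦ by
  rw [heq hx]
  exact (h x hx).congr_of_eventuallyEq (heq.eventuallyEq_of_mem (hU.mem_nhds hx))

end IsRiccatiSolutionOn

theorem darboux_transformed_riccati_solution_general {V ζ₀ ζ : 𝕜 → F} {lam : F} {U : Set 𝕜}
    (hU : IsOpen U) (h₀ : IsRiccatiSolutionOn V ζ₀ U)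
    (h : IsRiccatiSolutionOn (fun x ↦ V x - lam) ζ U) (hne : ∀ x ∈ U, ζ x ≠ ζ₀ x) :
    IsRiccatiSolutionOn (fun x ↦ darbouxPotential ζ₀ x - lam) (darbouxTransform ζ₀ ζ) U :=
  (h₀.neg_sub_div_sub h hne).congr hU fun x hx ↦ h₀.darbouxTransform_eq h hx (hne x hx)

end Riccati

/-- Proposition 3.4, invariant-curve item (equivalent form): the Darboux transform
ζ⁺_λ = ζ_λ + (ζ_λ' − ζ₀')/(ζ_λ − ζ₀) of a Riccati solution ζ_λ satisfies the
transformed Riccati equation (ζ⁺_λ)' = V₊ − λ − (ζ⁺_λ)² with V₊ = −ζ₀' + ζ₀². -/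
theorem darboux_transformed_riccati_solution
    (U : Set ℂ) (hU : IsOpen U) (V : ℂ → ℂ) (lam : ℂ)
    (hV : ∀ x ∈ U, DifferentiableAt ℂ V x)
    (ζ₀ : ℂ → ℂ)
    (hζ₀d1 : ∀ x ∈ U, DifferentiableAt ℂ ζ₀ x)
    (hζ₀d2 : ∀ x ∈ U, DifferentiableAt ℂ (deriv ζ₀) x)
    (hric₀ : ∀ x ∈ U, deriv ζ₀ x = V x - ζ₀ x ^ 2)
    (ζl : ℂ → ℂ)
    (hζld1 : ∀ x ∈ U, DifferentiableAt ℂ ζl x)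
    (hζld2 : ∀ x ∈ U, DifferentiableAt ℂ (deriv ζl) x)
    (hricl : ∀ x ∈ U, deriv ζl x = V x - lam - ζl x ^ 2)
    (hne : ∀ x ∈ U, ζl x ≠ ζ₀ x)
    (Vplus ζplus : ℂ → ℂ)
    (hVplus : ∀ x, Vplus x = -deriv ζ₀ x + ζ₀ x ^ 2)
    (hζplus : ∀ x, ζplus x = ζl x + (deriv ζl x - deriv ζ₀ x) / (ζl x - ζ₀ x)) :
    ∀ x ∈ U, deriv ζplus x = Vplus x - lam - ζplus x ^ 2 := by
  obtain rfl : Vplus = darbouxPotential ζ₀ := funext hVplus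
  obtain rfl : ζplus = darbouxTransform ζ₀ ζl := funext hζplus
  have h₀ : IsRiccatiSolutionOn V ζ₀ U :=
    fun x hx ↦ (hζ₀d1 x hx).hasDerivAt.congr_deriv (hric₀ x hx)
  have hl : IsRiccatiSolutionOn (fun x ↦ V x - lam) ζl U :=
    fun x hx ↦ (hζld1 x hx).hasDerivAt.congr_deriv (hricl x hx)
  exact fun x hx ↦ (darboux_transformed_riccati_solution_general hU h₀ hl hne x hx).deriv
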